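/- Let μ > 0 and ℏ > 0 be real constants and let F, G : ℝ → ℝ be continuous. Then the time kernel factor T_S is differentiable in v, differentiable in u after differentiating in v, and satisfies the canonical time kernel equation: for all real u, v, ∂²T_S/∂u∂v (u,v) = (μ/(2ℏ²))·F(u)·G(v)·T_S(u,v); equivalently, −(2ℏ²/μ)·∂²T_S/∂u∂v (u,v) + F(u)·G(v)·T_S(u,v) = 0. -/

import Mathlib

/-- The confluent hypergeometric limit function ₀F₁(;1;z) = Σ_{n=0}^∞ zⁿ/(n!)². -/
noncomputable def hyp0F1one (z : ℝ) : ℝ := ∑' n : ℕ, z ^ n / ((n.factorial : ℝ)) ^ 2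

/-- The time kernel factor T_S(u,v). -/
noncomputable def TS (μ hbar : ℝ) (F G : ℝ → ℝ) (u v : ℝ) : ℝ :=
  u / 4 + μ / (2 * hbar ^ 2) *
    ∫ v' in (0:ℝ)..v, G v' *
      ∫ u' in (0:ℝ)..u, F u' * (u' / 4) *
        hyp0F1one (μ / (2 * hbar ^ 2) * (∫ s in v'..v, G s) * (∫ s in u'..u, F s))

open Set Filter Topology MeasureTheory intervalIntegral

/-- Termwise differentiation of a power series whose coefficients are dominated by `1 / n!`. -/
lemma hasDerivAt_tsum_mul_pow_of_le_inv_factorial {a : ℕ → ℝ}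
    (ha : ∀ n, |a n| ≤ 1 / (n.factorial : ℝ)) (z : ℝ) :
    HasDerivAt (fun z : ℝ => ∑' n, a n * z ^ n) (∑' n : ℕ, (n + 1) * a (n + 1) * z ^ n) z := by
  set R : ℝ := |z| + 1
  have hR : 0 < R := by positivity
  set b : ℕ → ℝ := fun n => n * (1 / (n.factorial : ℝ)) * R ^ (n - 1)
  have hb : Summable b := by
    rw [← summable_nat_add_iff 1]
    refine (Real.summable_pow_div_factorial R).congr fun n => ?_
    simp only [b, Nat.factorial_succ, Nat.add_sub_cancel]
    push_cast
    field_simp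
  have hle : ∀ n y, y ∈ Metric.ball (0 : ℝ) R → ‖a n * (n * y ^ (n - 1))‖ ≤ b n := by
    intro n y hy
    have hy : |y| ≤ R := by simpa using (mem_ball_zero_iff.1 hy).le
    calc ‖a n * (n * y ^ (n - 1))‖ = n * |a n| * |y| ^ (n - 1) := by
          rw [norm_mul, norm_mul, norm_pow, Real.norm_eq_abs, Real.norm_eq_abs, Real.norm_eq_abs,
            Nat.abs_cast]
          ring
      _ ≤ b n := by
          have := ha n
          dsimp only [b]
          gcongr
  have hz : z ∈ Metric.ball (0 : ℝ) R := by simp [R]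
  have h := hasDerivAt_tsum_of_isPreconnected (g := fun n z => a n * z ^ n)
    (g' := fun n z => a n * (n * z ^ (n - 1))) (y₀ := (0 : ℝ)) hb Metric.isOpen_ball
    (convex_ball (0 : ℝ) R).isPreconnected
    (fun n y _ => (hasDerivAt_pow n y).const_mul (a n)) hle (Metric.mem_ball_self hR)
    (summable_of_ne_finset_zero (s := {0}) fun n hn => by
      have : n ≠ 0 := by simpa using hn
      simp [this]) hz
  refine h.congr_deriv ?_
  rw [(Summable.of_norm_bounded hb fun n => hle n z hz).tsum_eq_zero_add]
  simp only [Nat.cast_zero, zero_mul, mul_zero, zero_add, Nat.add_sub_cancel]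
  refine tsum_congr fun n => ?_
  push_cast
  ring

/-- The derivative `∑ zⁿ / (n! (n+1)!)` of `₀F₁(;1;z)`. -/
noncomputable def hyp0F1oneDeriv (z : ℝ) : ℝ :=
  ∑' n : ℕ, 1 / ((n.factorial : ℝ) * ((n + 1).factorial : ℝ)) * z ^ n

lemma one_le_factorial_cast (n : ℕ) : (1 : ℝ) ≤ n.factorial := by
  exact_mod_cast n.factorial_pos

lemma hasDerivAt_hyp0F1one (z : ℝ) : HasDerivAt hyp0F1one (hyp0F1oneDeriv z) z := by
  have h := hasDerivAt_tsum_mul_pow_of_le_inv_factorial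
    (a := fun n => 1 / (n.factorial : ℝ) ^ 2) (fun n => by
      have := one_le_factorial_cast n
      rw [abs_of_nonneg (by positivity)]
      gcongr
      nlinarith) z
  have heq : hyp0F1one = fun y => ∑' n : ℕ, 1 / (n.factorial : ℝ) ^ 2 * y ^ n := by
    funext y
    exact tsum_congr fun n => by ring
  rw [heq]
  refine h.congr_deriv (tsum_congr fun n => ?_)
  rw [Nat.factorial_succ]
  push_cast
  field_simp

lemma hyp0F1one_zero : hyp0F1one 0 = 1 := by
  rw [hyp0F1one, tsum_eq_single 0 fun n hn => by simp [hn]]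
  simp

lemma continuous_hyp0F1one : Continuous hyp0F1one :=
  continuous_iff_continuousAt.2 fun z => (hasDerivAt_hyp0F1one z).continuousAt

lemma differentiable_hyp0F1oneDeriv : Differentiable ℝ hyp0F1oneDeriv := by
  refine fun z =>
    (hasDerivAt_tsum_mul_pow_of_le_inv_factorial (fun n => ?_) z).differentiableAt
  have h₁ := one_le_factorial_cast n
  have h₂ := one_le_factorial_cast (n + 1)
  rw [abs_of_nonneg (by positivity)]
  gcongr
  nlinarith

/-- `₀F₁(;1;z)` solves `(z w')' = w`. -/
lemma hasDerivAt_mul_hyp0F1oneDeriv (z : ℝ) :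
    HasDerivAt (fun z => z * hyp0F1oneDeriv z) (hyp0F1one z) z := by
  have h := hasDerivAt_tsum_mul_pow_of_le_inv_factorial
    (a := fun n => n / (n.factorial : ℝ) ^ 2) (fun n => by
      have h₁ := one_le_factorial_cast n
      have h₂ : (n : ℝ) ≤ n.factorial := by exact_mod_cast n.self_le_factorial
      rw [abs_of_nonneg (by positivity), div_le_div_iff₀ (by positivity) (by positivity)]
      nlinarith) z
  have heq : (fun z => z * hyp0F1oneDeriv z) =
      fun y => ∑' n : ℕ, n / (n.factorial : ℝ) ^ 2 * y ^ n := by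
    funext y
    have hs : Summable fun n : ℕ => n / (n.factorial : ℝ) ^ 2 * y ^ n := by
      refine (Real.summable_pow_div_factorial |y|).of_norm_bounded fun n => ?_
      have h₂ : (n : ℝ) ≤ n.factorial := by exact_mod_cast n.self_le_factorial
      have h₁ := one_le_factorial_cast n
      simp only [norm_mul, norm_div, norm_pow, Real.norm_eq_abs, Nat.abs_cast]
      rw [div_mul_eq_mul_div, div_le_div_iff₀ (by positivity) (by positivity)]
      have := mul_le_mul_of_nonneg_right h₂ (show 0 ≤ |y| ^ n * n.factorial by positivity)
      nlinarith
    rw [hs.tsum_eq_zero_add, hyp0F1oneDeriv, ← tsum_mul_left]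
    simp only [Nat.cast_zero, zero_div, zero_mul, zero_add]
    refine tsum_congr fun n => ?_
    rw [Nat.factorial_succ]
    push_cast
    field_simp
    ring
  rw [heq]
  refine h.congr_deriv (tsum_congr fun n => ?_)
  rw [Nat.factorial_succ]
  push_cast
  field_simp

/-- Differentiation under the integral sign over a compact interval. -/
lemma hasDerivAt_intervalIntegral_of_continuous {k k' : ℝ → ℝ → ℝ}
    (hk : Continuous k.uncurry) (hk' : Continuous k'.uncurry)
    (h : ∀ w s, HasDerivAt (fun w => k w s) (k' w s) w) (a b w : ℝ) :
    HasDerivAt (fun w => ∫ s in a..b, k w s) (∫ s in a..b, k' w s) w := by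
  obtain ⟨C, hC⟩ := ((isCompact_closedBall w 1).prod (isCompact_uIcc (a := a) (b := b))
    ).exists_bound_of_continuousOn hk'.continuousOn
  refine (hasDerivAt_integral_of_dominated_loc_of_deriv_le (bound := fun _ => C)
    (Metric.closedBall_mem_nhds w one_pos)
    (Eventually.of_forall fun x => (hk.uncurry_left x).aestronglyMeasurable)
    ((hk.uncurry_left w).intervalIntegrable _ _)
    (hk'.uncurry_left w).aestronglyMeasurable ?_ intervalIntegrable_const
    (ae_of_all _ fun t _ x _ => h x t)).2
  exact ae_of_all _ fun t ht x hx => hC (x, t) ⟨hx, uIoc_subset_uIcc ht⟩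

/-- Leibniz rule for an integral whose upper limit and integrand both depend on the variable. -/
lemma hasDerivAt_intervalIntegral_diag {k k' : ℝ → ℝ → ℝ}
    (hk : Continuous k.uncurry) (hk' : Continuous k'.uncurry)
    (h : ∀ w s, HasDerivAt (fun w => k w s) (k' w s) w) (a u : ℝ) :
    HasDerivAt (fun u => ∫ s in a..u, k u s) (k u u + ∫ s in a..u, k' u s) u := by
  have hstrict := hasStrictFDerivAt_uncurry_coprod (𝕜 := ℝ) (u := (u, u))
    (f := fun x w => ∫ s in a..x, k w s)
    (f₁ := fun x w => ContinuousLinearMap.toSpanSingleton ℝ (k w x))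
    (f₂ := fun x w => ContinuousLinearMap.toSpanSingleton ℝ (∫ s in a..x, k' w s))
    (Eventually.of_forall fun v =>
      ((hk.uncurry_left v.2).integral_hasStrictDerivAt a v.1).hasDerivAt.hasFDerivAt)
    (Eventually.of_forall fun v =>
      (hasDerivAt_intervalIntegral_of_continuous hk hk' h a v.1 v.2).hasFDerivAt)
    (Continuous.continuousAt <|
      (ContinuousLinearMap.toSpanSingletonCLE (𝕜 := ℝ) (E := ℝ)).continuous.comp
        (hk.comp continuous_swap))
    (Continuous.continuousAt <|
      (ContinuousLinearMap.toSpanSingletonCLE (𝕜 := ℝ) (E := ℝ)).continuous.comp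
        ((continuous_parametric_primitive_of_continuous hk').comp continuous_swap))
  have hdiag : HasDerivAt (fun x : ℝ => (x, x)) ((1 : ℝ), (1 : ℝ)) u :=
    (hasDerivAt_id u).prodMk (hasDerivAt_id u)
  have := HasFDerivAt.comp_hasDerivAt (f := fun x : ℝ => (x, x)) u hstrict.hasFDerivAt hdiag
  simpa [Function.comp_def, Function.HasUncurry.uncurry] using this

/-- The inner integral of the time kernel factor, with `G̃(v,v')` replaced by a free variable. -/
noncomputable def innerKernel (c : ℝ) (F : ℝ → ℝ) (u b : ℝ) : ℝ :=
  ∫ s in (0:ℝ)..u, F s * (s / 4) * hyp0F1one (c * b * ∫ t in s..u, F t)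

lemma continuous_integral_uncurry {F : ℝ → ℝ} (hF : Continuous F) :
    Continuous fun p : ℝ × ℝ => ∫ t in p.2..p.1, F t := by
  have h : Continuous fun x => ∫ t in (0:ℝ)..x, F t :=
    continuous_primitive (fun a b => hF.intervalIntegrable a b) 0
  have heq : (fun p : ℝ × ℝ => ∫ t in p.2..p.1, F t) =
      fun p => (∫ t in (0:ℝ)..p.1, F t) - ∫ t in (0:ℝ)..p.2, F t := by
    funext p
    exact (integral_interval_sub_left (hF.intervalIntegrable _ _)
      (hF.intervalIntegrable _ _)).symm
  rw [heq]
  fun_prop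

lemma continuous_innerKernel {F : ℝ → ℝ} (hF : Continuous F) (c u : ℝ) :
    Continuous (innerKernel c F u) := by
  have hA : Continuous fun s => ∫ t in s..u, F t :=
    (continuous_integral_uncurry hF).comp (Continuous.prodMk_right u)
  refine continuous_parametric_intervalIntegral_of_continuous' ?_ 0 u
  have := continuous_hyp0F1one
  simp only [Function.uncurry_def]
  fun_prop

lemma integral_innerKernel {F : ℝ → ℝ} (hF : Continuous F) (c u B : ℝ) :
    c * ∫ b in (0:ℝ)..B, innerKernel c F u b =
      ∫ s in (0:ℝ)..u, F s * (s / 4) * (c * B * hyp0F1oneDeriv (c * B * ∫ t in s..u, F t)) := by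
  have hA : Continuous fun s => ∫ t in s..u, F t :=
    (continuous_integral_uncurry hF).comp (Continuous.prodMk_right u)
  have hc := continuous_hyp0F1one
  have hc' := differentiable_hyp0F1oneDeriv.continuous
  have hd : ∀ b, HasDerivAt (fun b => ∫ s in (0:ℝ)..u,
      F s * (s / 4) * (c * b * hyp0F1oneDeriv (c * b * ∫ t in s..u, F t)))
      (c * innerKernel c F u b) b := by
    intro b
    rw [innerKernel, ← intervalIntegral.integral_const_mul]
    refine hasDerivAt_intervalIntegral_of_continuous
      (k := fun b s => F s * (s / 4) * (c * b * hyp0F1oneDeriv (c * b * ∫ t in s..u, F t)))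
      (k' := fun b s => c * (F s * (s / 4) * hyp0F1one (c * b * ∫ t in s..u, F t)))
      (by simp only [Function.uncurry_def]; fun_prop)
      (by simp only [Function.uncurry_def]; fun_prop) (fun w s => ?_) 0 u b
    set x := ∫ t in s..u, F t
    have hlin : HasDerivAt (fun w => c * w) c w := by
      simpa using (hasDerivAt_id w).const_mul c
    have hD := (differentiable_hyp0F1oneDeriv (c * w * x)).hasDerivAt
    have hode := (hasDerivAt_mul_hyp0F1oneDeriv (c * w * x)).unique
      ((hasDerivAt_id _).mul hD)
    refine ((hlin.mul (hD.comp w (hlin.mul_const x))).const_mul (F s * (s / 4))).congr_deriv ?_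
    rw [hode]
    simp only [Function.comp_apply]
    ring
  rw [← intervalIntegral.integral_const_mul, integral_eq_sub_of_hasDerivAt (fun b _ => hd b)
    ((continuous_const.mul (continuous_innerKernel hF c u)).intervalIntegrable _ _)]
  simp

lemma hasDerivAt_innerKernel {F : ℝ → ℝ} (hF : Continuous F) (c b u : ℝ) :
    HasDerivAt (fun u => innerKernel c F u b)
      (F u * (u / 4 + c * ∫ y in (0:ℝ)..b, innerKernel c F u y)) u := by
  have hA := continuous_integral_uncurry hF
  have hc := continuous_hyp0F1one
  have hc' := differentiable_hyp0F1oneDeriv.continuous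
  have h := hasDerivAt_intervalIntegral_diag
    (k := fun u s => F s * (s / 4) * hyp0F1one (c * b * ∫ t in s..u, F t))
    (k' := fun u s => F s * (s / 4) *
      (hyp0F1oneDeriv (c * b * ∫ t in s..u, F t) * (c * b * F u)))
    (by simp only [Function.uncurry_def]; fun_prop)
    (by simp only [Function.uncurry_def]; fun_prop)
    (fun w s => ((hasDerivAt_hyp0F1one _).comp w
      ((hF.integral_hasStrictDerivAt s w).hasDerivAt.const_mul (c * b))).const_mul _) 0 u
  refine h.congr_deriv (Eq.symm ?_)
  rw [integral_innerKernel hF, mul_add, ← intervalIntegral.integral_const_mul]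
  congr 1
  · rw [integral_same, mul_zero, hyp0F1one_zero, mul_one]
  · exact integral_congr fun s _ => by ring

lemma TS_eq_integral_innerKernel (μ hbar : ℝ) {F G : ℝ → ℝ} (hF : Continuous F)
    (hG : Continuous G) (u v : ℝ) :
    TS μ hbar F G u v = u / 4 + μ / (2 * hbar ^ 2) *
      ∫ b in (0:ℝ)..(∫ s in (0:ℝ)..v, G s), innerKernel (μ / (2 * hbar ^ 2)) F u b := by
  have hd : ∀ x, HasDerivAt (fun x => ∫ s in x..v, G s) (-G x) x := fun x =>
    integral_hasDerivAt_left (hG.intervalIntegrable _ _)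
      hG.stronglyMeasurable.stronglyMeasurableAtFilter hG.continuousAt
  have h := integral_comp_mul_deriv (a := 0) (b := v) (fun x _ => hd x) hG.neg.continuousOn
    (continuous_innerKernel hF (μ / (2 * hbar ^ 2)) u)
  rw [integral_same] at h
  rw [TS, integral_symm (∫ s in (0:ℝ)..v, G s) 0, ← h, ← intervalIntegral.integral_neg]
  congr 2
  exact integral_congr fun x _ => by simp [innerKernel, mul_comm]

theorem stmt10 (μ hbar : ℝ) (hμ : 0 < μ) (hhbar : 0 < hbar)
    (F G : ℝ → ℝ) (hF : Continuous F) (hG : Continuous G) :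
    (∀ u v : ℝ, DifferentiableAt ℝ (fun w : ℝ => TS μ hbar F G u w) v) ∧
    (∀ u v : ℝ, DifferentiableAt ℝ
      (fun w : ℝ => deriv (fun w' : ℝ => TS μ hbar F G w w') v) u) ∧
    (∀ u v : ℝ,
      deriv (fun w : ℝ => deriv (fun w' : ℝ => TS μ hbar F G w w') v) u =
        μ / (2 * hbar ^ 2) * F u * G v * TS μ hbar F G u v) := by
  set c := μ / (2 * hbar ^ 2) with hc
  have hv : ∀ u v, HasDerivAt (fun w => TS μ hbar F G u w)
      (c * (innerKernel c F u (∫ s in (0:ℝ)..v, G s) * G v)) v := by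
    intro u v
    simp only [TS_eq_integral_innerKernel μ hbar hF hG, ← hc]
    exact ((((continuous_innerKernel hF c u).integral_hasStrictDerivAt 0 _).hasDerivAt.comp v
      (hG.integral_hasStrictDerivAt 0 v).hasDerivAt).const_mul c).const_add _
  have hu : ∀ u v, HasDerivAt (fun w => deriv (fun w' => TS μ hbar F G w w') v)
      (c * F u * G v * TS μ hbar F G u v) u := by
    intro u v
    simp only [fun w => (hv w v).deriv]
    refine (((hasDerivAt_innerKernel hF c (∫ s in (0:ℝ)..v, G s) u).mul_const
      (G v)).const_mul c).congr_deriv ?_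
    rw [TS_eq_integral_innerKernel μ hbar hF hG]
    ring
  exact ⟨fun u v => (hv u v).differentiableAt, fun u v => (hu u v).differentiableAt,
    fun u v => (hu u v).deriv⟩
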